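/- arXiv:1706.00830 — 4 statements merged into one kernel-verified Lean document; each statement's English description precedes it below -/
import Mathlib

section
/- (Hindman's theorem, finite-unions form.) For every colouring of the set [ω]^{<ω} of nonempty finite subsets of ω into finitely many colours, there exists an infinite pairwise disjoint family X of nonempty finite subsets of ω such that FU(X) is monochromatic (i.e., all elements of FU(X) receive the same colour). -/
/-- `FU X` is the set of all unions `⋃_{x ∈ F} x` where `F` ranges over the
nonempty finite subsets of `X`. -/
def FU (X : Set (Finset ℕ)) : Set (Finset ℕ) :=
  {s | ∃ F : Finset (Finset ℕ), F.Nonempty ∧ ↑F ⊆ X ∧ s = F.sup id}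

/-!
Hindman's theorem on finite sums holds in every additive commutative monoid. Apply it to multisets,
along distinct singletons `{e 0}, {e 1}, …`, colouring a multiset by its underlying set. It yields a
sequence `b` with monochromatic finite sums, each of which is a finite sum of the `{e i}` and hence
a nonempty multiset without repetition. That `b p + b q` has no repetition makes `b p` and `b q`
disjoint; the semigroup of finite sets under union would not give this, since there `b` could be
constant.
-/

open Finset Function

section HindmanSums

variable {M : Type*} [AddCommMonoid M]

theorem mem_FS_iff_exists_sum {a : Stream' M} {m : M} :
    m ∈ Hindman.FS a ↔ ∃ F : Finset ℕ, F.Nonempty ∧ ∑ i ∈ F, a.get i = m := by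
  constructor
  · intro hm
    have sum_succ (b : Stream' M) (F : Finset ℕ) :
        ∑ i ∈ F.map (addRightEmbedding 1), b.get i = ∑ i ∈ F, b.tail.get i := sum_map ..
    induction hm with
    | head' b => exact ⟨{0}, singleton_nonempty 0, sum_singleton ..⟩
    | tail' b _ _ ih =>
      obtain ⟨F, hF, rfl⟩ := ih
      exact ⟨F.map (addRightEmbedding 1), hF.map, sum_succ b F⟩
    | cons' b _ _ ih =>
      obtain ⟨F, -, rfl⟩ := ih
      refine ⟨insert 0 (F.map (addRightEmbedding 1)), insert_nonempty .., ?_⟩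
      rw [sum_insert (by simp), sum_succ]
  · rintro ⟨F, hF, rfl⟩
    exact Hindman.FS.finsetSum a F hF

theorem exists_monochromatic_sums {κ : Type*} [Finite κ] (c : M → κ) (a : ℕ → M) :
    ∃ (b : ℕ → M) (k : κ), ∀ G : Finset ℕ, G.Nonempty →
      c (∑ j ∈ G, b j) = k ∧ ∃ F : Finset ℕ, F.Nonempty ∧ ∑ i ∈ F, a i = ∑ j ∈ G, b j := by
  obtain ⟨_, ⟨k, rfl⟩, b, hb⟩ := Hindman.FS_partition_regular a
    (Set.range fun k => c ⁻¹' {k} ∩ Hindman.FS a) (Set.finite_range _)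
    fun m hm => ⟨_, ⟨c m, rfl⟩, rfl, hm⟩
  refine ⟨b, k, fun G hG => ?_⟩
  obtain ⟨hc, hFS⟩ := hb (mem_FS_iff_exists_sum.2 ⟨G, hG, rfl⟩)
  exact ⟨hc, mem_FS_iff_exists_sum.1 hFS⟩

end HindmanSums

section DisjointSequences

variable {α : Type*} [DecidableEq α]

theorem toFinset_sum_eq_sup {ι : Type*} (b : ι → Multiset α) (G : Finset ι) :
    (∑ j ∈ G, b j).toFinset = G.sup fun j => (b j).toFinset := by
  ext x
  simp [Multiset.mem_sum]

theorem exists_disjoint_seq_monochromatic_sup {κ : Type*} [Infinite α] [Finite κ]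
    (c : Finset α → κ) :
    ∃ x : ℕ → Finset α, (∀ j, (x j).Nonempty) ∧ Pairwise (Disjoint on x) ∧
      ∃ k, ∀ G : Finset ℕ, G.Nonempty → c (G.sup x) = k := by
  let e := Infinite.natEmbedding α
  obtain ⟨b, k, hb⟩ := exists_monochromatic_sums (fun m : Multiset α => c m.toFinset)
    fun i => {e i}
  have exists_val_eq_sum (G : Finset ℕ) (hG : G.Nonempty) :
      ∃ s : Finset α, s.Nonempty ∧ s.val = ∑ j ∈ G, b j := by
    obtain ⟨F, hF, hFG⟩ := (hb G hG).2
    refine ⟨F.map e, hF.map, ?_⟩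
    rw [← hFG, ← sum_multiset_singleton, sum_map]
  have toFinset_nonempty (j : ℕ) : (b j).toFinset.Nonempty := by
    obtain ⟨s, hs, hsj⟩ := exists_val_eq_sum {j} (singleton_nonempty j)
    rw [sum_singleton] at hsj
    rwa [← hsj, val_toFinset]
  have pairwise_disjoint : Pairwise (Disjoint on fun j => (b j).toFinset) := by
    intro p q hpq
    obtain ⟨s, -, hs⟩ := exists_val_eq_sum {p, q} (insert_nonempty ..)
    rw [sum_pair hpq] at hs
    have hnodup : (b p + b q).Nodup := hs ▸ s.nodup
    exact Multiset.disjoint_toFinset.2 (Multiset.nodup_add.1 hnodup).2.2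
  refine ⟨fun j => (b j).toFinset, toFinset_nonempty, pairwise_disjoint, k, fun G hG => ?_⟩
  rw [← toFinset_sum_eq_sup]
  exact (hb G hG).1

end DisjointSequences

theorem hindman_finite_unions_general {α κ : Type*} [DecidableEq α] [Infinite α] [Finite κ]
    (c : Finset α → κ) :
    ∃ X : Set (Finset α), X.Infinite ∧ (∀ x ∈ X, x.Nonempty) ∧ X.Pairwise Disjoint ∧
      ∃ k, ∀ F : Finset (Finset α), F.Nonempty → ↑F ⊆ X → c (F.sup id) = k := by
  obtain ⟨x, hne, hdisj, k, hk⟩ := exists_disjoint_seq_monochromatic_sup c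
  have hinj : Injective x :=
    pairwise_ne_iff_injective.1 (hdisj.mono fun p _ h => h.ne (hne p).ne_empty)
  refine ⟨Set.range x, Set.infinite_range_of_injective hinj, Set.forall_mem_range.2 hne,
    hdisj.range_pairwise, k, fun F hF hFX => ?_⟩
  obtain ⟨G, rfl⟩ : ∃ G : Finset ℕ, G.image x = F := by
    rw [← Set.image_univ] at hFX
    obtain ⟨G, -, hG⟩ := subset_set_image_iff.1 hFX
    exact ⟨G, hG⟩
  rw [sup_image, id_comp]
  exact hk G (image_nonempty.1 hF)

/-- Hindman's theorem, finite-unions form: for every colouring of the nonempty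
finite subsets of ω into finitely many colours there is an infinite pairwise
disjoint family `X` of nonempty finite sets with `FU X` monochromatic. -/
theorem hindman_finite_unions (k : ℕ) (c : Finset ℕ → Fin k) :
    ∃ X : Set (Finset ℕ), X.Infinite ∧ (∀ x ∈ X, x.Nonempty) ∧
      X.Pairwise (fun a b => Disjoint a b) ∧
      ∃ i : Fin k, ∀ s ∈ FU X, c s = i := by
  obtain ⟨X, hinf, hne, hdisj, i, hi⟩ := hindman_finite_unions_general c
  exact ⟨X, hinf, hne, hdisj, i, fun _ ⟨F, hF, hFX, hs⟩ => hs ▸ hi F hF hFX⟩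
end

section
/- The cardinal invariant hom_h is unchanged if in its definition the requirement that the members of the witnessing family 𝒳 be block sequences is weakened to requiring only that they be infinite pairwise disjoint families: the least cardinality of a family 𝒳 of infinite pairwise disjoint families of nonempty finite subsets of ω such that every finite colouring of [ω]^{<ω} admits some X ∈ 𝒳 with FU(X) monochromatic equals hom_h. -/
/-- A block sequence: an infinite family of nonempty finite subsets of ω such that
any two distinct members are separated (`max x < min y` or `max y < min x`). -/
def IsBlockSeq (X : Set (Finset ℕ)) : Prop :=
  X.Infinite ∧ (∀ x ∈ X, x.Nonempty) ∧
    ∀ x ∈ X, ∀ y ∈ X, x ≠ y →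
      (∀ m ∈ x, ∀ n ∈ y, m < n) ∨ (∀ m ∈ y, ∀ n ∈ x, m < n)

/-- `FU X` is monochromatic for the colouring `c`. -/
def MonoFor (X : Set (Finset ℕ)) {k : ℕ} (c : Finset ℕ → Fin k) : Prop :=
  ∃ i : Fin k, ∀ s ∈ FU X, c s = i

/-- `𝒳` is a family of infinite block sequences such that every finite colouring of
the nonempty finite subsets of ω admits some `X ∈ 𝒳` with `FU X` monochromatic. -/
def IsHomWitness (𝒳 : Set (Set (Finset ℕ))) : Prop :=
  (∀ X ∈ 𝒳, IsBlockSeq X) ∧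
    ∀ (k : ℕ) (c : Finset ℕ → Fin k), ∃ X ∈ 𝒳, MonoFor X c

/-- The cardinal invariant `hom_h`: the least cardinality of a family of infinite
block sequences witnessing Hindman's theorem for all finite colourings. -/
noncomputable def homH : Cardinal :=
  sInf {𝔠 : Cardinal | ∃ 𝒳 : Set (Set (Finset ℕ)), IsHomWitness 𝒳 ∧ Cardinal.mk 𝒳 = 𝔠}

/-!
A point lies in at most one member of a pairwise disjoint family, so a finite set meets only
finitely many members. An infinite pairwise disjoint family of finite subsets of `ω` therefore has
members beyond any finite bound, and picking them one after the other yields a block sequence inside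
it. Since monochromaticity of `FU X` passes to subfamilies of `X`, replacing each family by a block
sequence inside it turns any witness of the weaker kind into one for `hom_h` that is no larger.
-/

theorem finite_setOf_not_disjoint {ι α : Type*} {s : Set ι} {f : ι → Set α}
    (hf : s.PairwiseDisjoint f) {t : Set α} (ht : t.Finite) :
    {i ∈ s | ¬ Disjoint (f i) t}.Finite := by
  have hpoint (a : α) : {i ∈ s | a ∈ f i}.Subsingleton :=
    fun _ hi _ hj => hf.elim_set hi.1 hj.1 a hi.2 hj.2
  refine (ht.biUnion fun a _ => (hpoint a).finite).subset ?_
  rintro i ⟨his, hmeet⟩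
  obtain ⟨a, hai, hat⟩ := Set.not_disjoint_iff.1 hmeet
  exact Set.mem_biUnion hat ⟨his, hai⟩

section BlockSequences

variable {α : Type*} [LinearOrder α] [LocallyFiniteOrderBot α] {X : Set (Finset α)}

theorem exists_mem_forall_lt_of_pairwiseDisjoint (hinf : X.Infinite)
    (hdisj : X.PairwiseDisjoint id) {s : Set α} (hs : s.Finite) :
    ∃ x ∈ X, ∀ a ∈ s, ∀ b ∈ x, a < b := by
  have hbelow : (⋃ a ∈ s, Set.Iic a).Finite := hs.biUnion fun a _ => Set.finite_Iic a
  have hcoe : X.PairwiseDisjoint ((↑) : Finset α → Set α) :=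
    hdisj.imp fun _ _ => Finset.disjoint_coe.2
  obtain ⟨x, hxX, hx⟩ := hinf.exists_notMem_finite (finite_setOf_not_disjoint hcoe hbelow)
  have hxs : Disjoint (x : Set α) (⋃ a ∈ s, Set.Iic a) := not_not.1 fun h => hx ⟨hxX, h⟩
  exact ⟨x, hxX, fun a ha b hb =>
    not_le.1 fun hba => Set.disjoint_left.1 hxs hb (Set.mem_biUnion ha hba)⟩

theorem exists_seq_mem_forall_lt_of_pairwiseDisjoint (hinf : X.Infinite)
    (hdisj : X.PairwiseDisjoint id) :
    ∃ x : ℕ → Finset α, (∀ n, x n ∈ X) ∧ ∀ m n, m < n → ∀ a ∈ x m, ∀ b ∈ x n, a < b := by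
  refine exists_seq_of_forall_finset_exists (· ∈ X) (fun x y => ∀ a ∈ x, ∀ b ∈ y, a < b)
    fun F _ => ?_
  obtain ⟨y, hyX, hy⟩ :=
    exists_mem_forall_lt_of_pairwiseDisjoint hinf hdisj (F.biUnion id).finite_toSet
  exact ⟨y, hyX, fun x hx a ha => hy a (Finset.mem_biUnion.2 ⟨x, hx, ha⟩)⟩

end BlockSequences

theorem isBlockSeq_range {ι : Type*} [LinearOrder ι] [Infinite ι] {x : ι → Finset ℕ}
    (hne : ∀ i, (x i).Nonempty) (hlt : ∀ i j, i < j → ∀ m ∈ x i, ∀ n ∈ x j, m < n) :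
    IsBlockSeq (Set.range x) := by
  have hinj : Function.Injective x := .of_lt_imp_ne fun i j hij heq => by
    obtain ⟨m, hm⟩ := hne i
    exact lt_irrefl m (hlt i j hij m hm m (heq ▸ hm))
  refine ⟨Set.infinite_range_of_injective hinj, Set.forall_mem_range.2 hne, ?_⟩
  rintro _ ⟨i, rfl⟩ _ ⟨j, rfl⟩ hij
  exact (lt_or_gt_of_ne (ne_of_apply_ne x hij)).imp (hlt i j) (hlt j i)

theorem exists_isBlockSeq_subset {X : Set (Finset ℕ)} (hinf : X.Infinite)
    (hne : ∀ x ∈ X, x.Nonempty) (hdisj : X.PairwiseDisjoint id) :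
    ∃ Y ⊆ X, IsBlockSeq Y := by
  obtain ⟨x, hxX, hlt⟩ := exists_seq_mem_forall_lt_of_pairwiseDisjoint hinf hdisj
  exact ⟨Set.range x, Set.range_subset_iff.2 hxX, isBlockSeq_range (fun n => hne _ (hxX n)) hlt⟩

theorem IsBlockSeq.pairwiseDisjoint {X : Set (Finset ℕ)} (hX : IsBlockSeq X) :
    X.PairwiseDisjoint id := by
  refine fun x hx y hy hxy => Finset.disjoint_left.2 fun n hnx hny => ?_
  rcases hX.2.2 x hx y hy hxy with hlt | hlt
  · exact lt_irrefl n (hlt n hnx n hny)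
  · exact lt_irrefl n (hlt n hny n hnx)

theorem FU_mono {X Y : Set (Finset ℕ)} (h : X ⊆ Y) : FU X ⊆ FU Y :=
  fun _ ⟨F, hF, hFX, hs⟩ => ⟨F, hF, hFX.trans h, hs⟩

theorem MonoFor.mono {X Y : Set (Finset ℕ)} {k : ℕ} {c : Finset ℕ → Fin k} (hY : MonoFor Y c)
    (h : X ⊆ Y) : MonoFor X c :=
  hY.imp fun _ hi s hs => hi s (FU_mono h hs)

theorem exists_isHomWitness_mk_le {𝒳 : Set (Set (Finset ℕ))}
    (hblock : ∀ X ∈ 𝒳, ∃ Y ⊆ X, IsBlockSeq Y)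
    (hmono : ∀ (k : ℕ) (c : Finset ℕ → Fin k), ∃ X ∈ 𝒳, MonoFor X c) :
    ∃ 𝒴 : Set (Set (Finset ℕ)), IsHomWitness 𝒴 ∧ Cardinal.mk 𝒴 ≤ Cardinal.mk 𝒳 := by
  choose! g hgX hg using hblock
  refine ⟨g '' 𝒳, ⟨Set.forall_mem_image.2 fun X hX => hg X hX, fun k c => ?_⟩, Cardinal.mk_image_le⟩
  obtain ⟨X, hX, hc⟩ := hmono k c
  exact ⟨g X, Set.mem_image_of_mem g hX, hc.mono (hgX X hX)⟩

/-- `hom_h` is unchanged if the witnessing families are only required to be infinite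
pairwise disjoint families of nonempty finite subsets of ω rather than block
sequences. -/
theorem homH_pairwiseDisjoint_version :
    sInf {𝔠 : Cardinal | ∃ 𝒳 : Set (Set (Finset ℕ)),
        (∀ X ∈ 𝒳, X.Infinite ∧ (∀ x ∈ X, x.Nonempty) ∧
          X.Pairwise (fun a b => Disjoint a b)) ∧
        (∀ (k : ℕ) (c : Finset ℕ → Fin k), ∃ X ∈ 𝒳, MonoFor X c) ∧
        Cardinal.mk 𝒳 = 𝔠} = homH := by
  refine csInf_eq_csInf_of_forall_exists_le ?_ ?_
  · rintro _ ⟨𝒳, hdisj, hmono, rfl⟩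
    have hblock (X) (hX : X ∈ 𝒳) : ∃ Y ⊆ X, IsBlockSeq Y :=
      have ⟨hinf, hne, hpd⟩ := hdisj X hX
      exists_isBlockSeq_subset hinf hne hpd
    obtain ⟨𝒴, h𝒴, hle⟩ := exists_isHomWitness_mk_le hblock hmono
    exact ⟨_, ⟨𝒴, h𝒴, rfl⟩, hle⟩
  · rintro _ ⟨𝒳, ⟨hblock, hmono⟩, rfl⟩
    have hdisj (X) (hX : X ∈ 𝒳) :
        X.Infinite ∧ (∀ x ∈ X, x.Nonempty) ∧ X.Pairwise (fun a b => Disjoint a b) :=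
      have hXblock := hblock X hX
      ⟨hXblock.1, hXblock.2.1, hXblock.pairwiseDisjoint⟩
    exact ⟨_, ⟨𝒳, hdisj, hmono, rfl⟩, le_rfl⟩
end

section
/- The cardinal invariant hom_h is unchanged if in its definition colourings into finitely many colours are replaced by colourings into two colours: the least cardinality of a family 𝒳 of infinite block sequences such that for every set A ⊆ [ω]^{<ω} there exists X ∈ 𝒳 with A FU-reaped by X (i.e., FU(X) ⊆ A or FU(X) ∩ A = ∅) equals hom_h. -/
/-- `A` is FU-reaped by `X`: `FU X ⊆ A` or `FU X ∩ A = ∅`. -/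
def FUReaped (A X : Set (Finset ℕ)) : Prop :=
  FU X ⊆ A ∨ FU X ∩ A = ∅

theorem mk_submonoidClosure_le {M : Type*} [Monoid M] (s : Set M) :
    Cardinal.mk (Submonoid.closure s) ≤ max Cardinal.aleph0 (Cardinal.mk s) := by
  rw [Submonoid.closure_eq_mrange]
  exact Cardinal.mk_range_le.trans (Cardinal.mk_list_le_max s)

theorem subset_FU (X : Set (Finset ℕ)) : X ⊆ FU X := fun x hx =>
  ⟨{x}, Finset.singleton_nonempty x, by simpa using hx, by simp⟩

theorem nonempty_of_mem_FU {X : Set (Finset ℕ)} (hX : ∀ x ∈ X, x.Nonempty) {s : Finset ℕ}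
    (hs : s ∈ FU X) : s.Nonempty := by
  obtain ⟨F, ⟨x, hx⟩, hFX, rfl⟩ := hs
  exact (hX x (hFX hx)).mono (Finset.le_sup (f := id) hx)

theorem FU_range {ι : Type*} (f : ι → Finset ℕ) :
    FU (Set.range f) = (fun s : Finset ι => s.biUnion f) '' {s | s.Nonempty} := by
  ext t
  constructor
  · rintro ⟨F, hF, hFf, rfl⟩
    obtain ⟨s, -, rfl⟩ := Finset.subset_set_image_iff.1 (Set.image_univ (f := f) ▸ hFf)
    exact ⟨s, Finset.image_nonempty.1 hF, by simp [Finset.sup_image, Finset.sup_eq_biUnion]⟩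
  · rintro ⟨s, hs, rfl⟩
    exact ⟨s.image f, hs.image f, by simp, by simp [Finset.sup_image, Finset.sup_eq_biUnion]⟩

theorem FUReaped.mono {A X Y : Set (Finset ℕ)} (h : FUReaped A X) (hYX : FU Y ⊆ FU X) :
    FUReaped A Y :=
  h.imp hYX.trans fun hX => Set.subset_eq_empty (Set.inter_subset_inter_left A hYX) hX

theorem MonoFor.fuReaped_preimage {X : Set (Finset ℕ)} {k : ℕ} {c : Finset ℕ → Fin k}
    (h : MonoFor X c) (S : Set (Fin k)) : FUReaped (c ⁻¹' S) X := by
  obtain ⟨i, hi⟩ := h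
  by_cases hiS : i ∈ S
  · exact Or.inl fun s hs => by simpa only [Set.mem_preimage, hi s hs] using hiS
  · refine Or.inr (Set.eq_empty_of_forall_notMem fun s ⟨hs, hsS⟩ => hiS ?_)
    simpa only [Set.mem_preimage, hi s hs] using hsS

theorem monoFor_of_forall_fuReaped {X : Set (Finset ℕ)} (hX : X.Nonempty) {k : ℕ}
    {c : Finset ℕ → Fin k} (h : ∀ i, FUReaped (c ⁻¹' {i}) X) : MonoFor X c := by
  obtain ⟨x, hx⟩ := hX
  refine ⟨c x, (h (c x)).resolve_right fun hempty => ?_⟩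
  exact hempty.subset ⟨subset_FU X hx, rfl⟩

/-- The block order on finite sets: `max x < min y` when both are nonempty. If one of them is empty,
the relation holds vacuously. -/
def BlockLT (x y : Finset ℕ) : Prop :=
  ∀ m ∈ x, ∀ n ∈ y, m < n

theorem BlockLT.ne {x y : Finset ℕ} (h : BlockLT x y) (hx : x.Nonempty) : x ≠ y := by
  rintro rfl
  obtain ⟨m, hm⟩ := hx
  exact (h m hm m hm).false

/-- A block sequence presented by its increasing enumeration. The set it enumerates is its
range. -/
@[ext]
structure BlockEnum where
  toFun : ℕ → Finset ℕ
  nonempty' : ∀ n, (toFun n).Nonempty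
  blockLT' : ∀ ⦃m n⦄, m < n → BlockLT (toFun m) (toFun n)

namespace BlockEnum

instance : FunLike BlockEnum ℕ (Finset ℕ) where
  coe := toFun
  coe_injective _ _ := BlockEnum.ext

theorem nonempty (f : BlockEnum) (n : ℕ) : (f n).Nonempty :=
  f.nonempty' n

theorem blockLT (f : BlockEnum) {m n : ℕ} (h : m < n) : BlockLT (f m) (f n) :=
  f.blockLT' h

theorem injective (f : BlockEnum) : Function.Injective f :=
  Function.Injective.of_lt_imp_ne fun m _ h => (f.blockLT h).ne (f.nonempty m)

theorem isBlockSeq_range (f : BlockEnum) : IsBlockSeq (Set.range f) := by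
  refine ⟨Set.infinite_range_of_injective f.injective, Set.forall_mem_range.2 f.nonempty, ?_⟩
  rintro _ ⟨m, rfl⟩ _ ⟨n, rfl⟩ hne
  exact (ne_of_apply_ne f hne).lt_or_gt.imp f.blockLT f.blockLT

theorem blockLT_biUnion (f : BlockEnum) {s t : Finset ℕ} (h : BlockLT s t) :
    BlockLT (s.biUnion f) (t.biUnion f) := by
  intro m hm n hn
  obtain ⟨a, ha, hma⟩ := Finset.mem_biUnion.1 hm
  obtain ⟨b, hb, hnb⟩ := Finset.mem_biUnion.1 hn
  exact f.blockLT (h a ha b hb) m hma n hnb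

instance : One BlockEnum where
  one :=
    { toFun := fun n => {n}
      nonempty' := Finset.singleton_nonempty
      blockLT' := fun m n h => by simpa [BlockLT] using h }

/-- Substitution of block sequences: the `n`-th block of `f * g` is the union of the blocks of `f`
whose indices lie in the `n`-th block of `g`. -/
instance : Mul BlockEnum where
  mul f g :=
    { toFun := fun n => (g n).biUnion f
      nonempty' := fun n => (g.nonempty n).biUnion fun m _ => f.nonempty m
      blockLT' := fun _ _ h => f.blockLT_biUnion (g.blockLT h) }

theorem one_apply (n : ℕ) : (1 : BlockEnum) n = {n} :=
  rfl

theorem mul_apply (f g : BlockEnum) (n : ℕ) : (f * g) n = (g n).biUnion f :=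
  rfl

theorem biUnion_mul (f g : BlockEnum) (s : Finset ℕ) :
    s.biUnion (f * g) = (s.biUnion g).biUnion f :=
  (Finset.biUnion_biUnion s g f).symm

instance : Monoid BlockEnum where
  mul_assoc f g h := DFunLike.ext _ _ fun n => by
    simp only [mul_apply, biUnion_mul]
  one_mul f := DFunLike.ext _ _ fun n => by
    ext m
    simp [mul_apply, one_apply]
  mul_one f := DFunLike.ext _ _ fun n => by
    simp only [mul_apply, one_apply, Finset.singleton_biUnion]

theorem FU_range_mul (f g : BlockEnum) :
    FU (Set.range (f * g)) = (fun s : Finset ℕ => s.biUnion f) '' FU (Set.range g) := by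
  simp only [FU_range, Set.image_image, biUnion_mul]

theorem FU_range_mul_subset (f g : BlockEnum) :
    FU (Set.range (f * g)) ⊆ FU (Set.range f) := by
  rw [FU_range_mul, FU_range f]
  exact Set.image_mono fun s => nonempty_of_mem_FU (Set.forall_mem_range.2 g.nonempty)

theorem fuReaped_range_mul {f g : BlockEnum} {A : Set (Finset ℕ)}
    (h : FUReaped {s | s.biUnion f ∈ A} (Set.range g)) : FUReaped A (Set.range (f * g)) := by
  rw [FUReaped, FU_range_mul, Set.image_subset_iff, ← Set.image_inter_preimage, Set.image_eq_empty]
  exact h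

theorem exists_mem_closure_forall_fuReaped {F : Set BlockEnum}
    (hF : ∀ A, ∃ f ∈ F, FUReaped A (Set.range f)) {𝒜 : Set (Set (Finset ℕ))} (h𝒜 : 𝒜.Finite) :
    ∃ f ∈ Submonoid.closure F, ∀ A ∈ 𝒜, FUReaped A (Set.range f) := by
  induction 𝒜, h𝒜 using Set.Finite.induction_on with
  | empty => exact ⟨1, one_mem _, by simp⟩
  | @insert B 𝒜 _ _ ih =>
    obtain ⟨f, hf, hf𝒜⟩ := ih
    obtain ⟨g, hg, hgB⟩ := hF {s | s.biUnion f ∈ B}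
    refine ⟨f * g, mul_mem hf (Submonoid.subset_closure hg), Set.forall_mem_insert.2 ⟨?_, ?_⟩⟩
    · exact fuReaped_range_mul hgB
    · exact fun A hA => (hf𝒜 A hA).mono (FU_range_mul_subset f g)

theorem isHomWitness_range_image_closure {F : Set BlockEnum}
    (hF : ∀ A, ∃ f ∈ F, FUReaped A (Set.range f)) :
    IsHomWitness ((fun f : BlockEnum => Set.range f) '' Submonoid.closure F) := by
  refine ⟨Set.forall_mem_image.2 fun f _ => f.isBlockSeq_range, fun k c => ?_⟩
  obtain ⟨f, hf, hfc⟩ :=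
    exists_mem_closure_forall_fuReaped hF (Set.finite_range fun i => c ⁻¹' {i})
  exact ⟨_, Set.mem_image_of_mem _ hf,
    monoFor_of_forall_fuReaped (Set.range_nonempty f) (Set.forall_mem_range.1 hfc)⟩

end BlockEnum

namespace IsBlockSeq

variable {X : Set (Finset ℕ)}

theorem exists_forall_lt (hX : IsBlockSeq X) (N : ℕ) : ∃ x ∈ X, ∀ n ∈ x, N < n := by
  by_contra! h
  choose! p hpx hpN using h
  have hp : Set.InjOn p X := by
    intro x hx y hy hxy
    by_contra hne
    rcases hX.2.2 x hx y hy hne with hlt | hlt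
    · exact (hlt _ (hpx x hx) _ (hpx y hy)).ne hxy
    · exact (hlt _ (hpx y hy) _ (hpx x hx)).ne hxy.symm
  exact hX.1 (Set.Finite.of_injOn (t := Set.Iic N) hpN hp (Set.finite_Iic N))

theorem exists_blockEnum (hX : IsBlockSeq X) : ∃ f : BlockEnum, Set.range f ⊆ X := by
  have hstep : ∀ S : Finset (Finset ℕ), (∀ x ∈ S, x ∈ X) → ∃ y ∈ X, ∀ x ∈ S, BlockLT x y := by
    intro S _
    obtain ⟨y, hy, hlt⟩ := hX.exists_forall_lt ((S.sup id).sup id)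
    refine ⟨y, hy, fun x hx m hm n hn => lt_of_le_of_lt ?_ (hlt n hn)⟩
    exact Finset.le_sup (f := id) (Finset.le_sup (f := id) hx hm)
  obtain ⟨f, hfX, hlt⟩ := exists_seq_of_forall_finset_exists (· ∈ X) BlockLT hstep
  exact ⟨⟨f, fun n => hX.2.1 _ (hfX n), hlt⟩, Set.range_subset_iff.2 hfX⟩

end IsBlockSeq

/-- A family of block sequences witnessing Hindman's theorem for two-colourings: the families whose
least cardinality is compared with `homH`. -/
def IsReapingFamily (𝒳 : Set (Set (Finset ℕ))) : Prop :=
  (∀ X ∈ 𝒳, IsBlockSeq X) ∧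
    ∀ A : Set (Finset ℕ), A ⊆ {s | s.Nonempty} → ∃ X ∈ 𝒳, FUReaped A X

namespace IsHomWitness

variable {𝒳 𝒴 : Set (Set (Finset ℕ))}

theorem mono (h : IsHomWitness 𝒳) (h𝒳𝒴 : 𝒳 ⊆ 𝒴) (h𝒴 : ∀ Y ∈ 𝒴, IsBlockSeq Y) :
    IsHomWitness 𝒴 :=
  ⟨h𝒴, fun k c => (h.2 k c).imp fun _ hX => ⟨h𝒳𝒴 hX.1, hX.2⟩⟩

theorem isReapingFamily (h : IsHomWitness 𝒳) : IsReapingFamily 𝒳 := by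
  classical
  refine ⟨h.1, fun A _ => ?_⟩
  let c : Finset ℕ → Fin 2 := fun s => if s ∈ A then 0 else 1
  have hc : c ⁻¹' {0} = A := by
    ext s
    simp [c]
  obtain ⟨X, hX, hXc⟩ := h.2 2 c
  exact ⟨X, hX, hc ▸ hXc.fuReaped_preimage {0}⟩

end IsHomWitness

namespace IsReapingFamily

variable {𝒳 : Set (Set (Finset ℕ))}

theorem exists_fuReaped (h : IsReapingFamily 𝒳) (A : Set (Finset ℕ)) :
    ∃ X ∈ 𝒳, FUReaped A X := by
  obtain ⟨X, hX, hXA⟩ := h.2 {s ∈ A | s.Nonempty} fun _ hs => hs.2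
  refine ⟨X, hX, hXA.imp (fun hsub s hs => (hsub hs).1) fun hempty => ?_⟩
  refine Set.eq_empty_of_forall_notMem fun s ⟨hs, hsA⟩ => hempty.subset ⟨hs, hsA, ?_⟩
  exact nonempty_of_mem_FU (h.1 X hX).2.1 hs

theorem infinite (h : IsReapingFamily 𝒳) : 𝒳.Infinite := by
  intro hfin
  choose! a ha using fun X hX => (h.1 X hX).1.nonempty
  obtain ⟨X, hX, hsub | hempty⟩ := h.exists_fuReaped (a '' 𝒳)
  · exact (h.1 X hX).1 ((hfin.image a).subset ((subset_FU X).trans hsub))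
  · exact hempty.subset ⟨subset_FU X (ha X hX), Set.mem_image_of_mem a hX⟩

theorem exists_blockEnum_family (h : IsReapingFamily 𝒳) :
    ∃ F : Set BlockEnum, Cardinal.mk F ≤ Cardinal.mk 𝒳 ∧
      ∀ A, ∃ f ∈ F, FUReaped A (Set.range f) := by
  choose f hf using fun X : 𝒳 => (h.1 X X.2).exists_blockEnum
  refine ⟨Set.range f, Cardinal.mk_range_le, fun A => ?_⟩
  obtain ⟨X, hX, hXA⟩ := h.exists_fuReaped A
  exact ⟨f ⟨X, hX⟩, Set.mem_range_self _, hXA.mono (FU_mono (hf ⟨X, hX⟩))⟩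

theorem exists_isHomWitness_mk_eq (h : IsReapingFamily 𝒳) :
    ∃ 𝒴, IsHomWitness 𝒴 ∧ Cardinal.mk 𝒴 = Cardinal.mk 𝒳 := by
  have h𝒳 : Cardinal.aleph0 ≤ Cardinal.mk 𝒳 := Cardinal.infinite_iff.1 h.infinite.to_subtype
  obtain ⟨F, hF𝒳, hF⟩ := h.exists_blockEnum_family
  set 𝒴 := (fun f : BlockEnum => Set.range f) '' Submonoid.closure F
  have h𝒴 : IsHomWitness 𝒴 := BlockEnum.isHomWitness_range_image_closure hF
  have hcard : Cardinal.mk 𝒴 ≤ Cardinal.mk 𝒳 := calc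
    Cardinal.mk 𝒴 ≤ Cardinal.mk (Submonoid.closure F) := Cardinal.mk_image_le
    _ ≤ max Cardinal.aleph0 (Cardinal.mk F) := mk_submonoidClosure_le F
    _ ≤ Cardinal.mk 𝒳 := max_le h𝒳 hF𝒳
  refine ⟨𝒳 ∪ 𝒴, h𝒴.mono Set.subset_union_right ?_, ?_⟩
  · exact fun X hX => hX.elim (h.1 X) (h𝒴.1 X)
  · refine le_antisymm ?_ (Cardinal.mk_le_mk_of_subset Set.subset_union_left)
    exact (Cardinal.mk_union_le 𝒳 𝒴).trans (Cardinal.add_le_of_le h𝒳 le_rfl hcard)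

end IsReapingFamily

/-- `hom_h` is unchanged if finite colourings are replaced by two-colourings: it is
the least cardinality of a family `𝒳` of infinite block sequences such that every
`A ⊆ [ω]^{<ω}` is FU-reaped by some member of `𝒳`. -/
theorem homH_two_colour_version :
    sInf {𝔠 : Cardinal | ∃ 𝒳 : Set (Set (Finset ℕ)),
        (∀ X ∈ 𝒳, IsBlockSeq X) ∧
        (∀ A : Set (Finset ℕ), A ⊆ {s | s.Nonempty} → ∃ X ∈ 𝒳, FUReaped A X) ∧
        Cardinal.mk 𝒳 = 𝔠} = homH := by
  unfold homH
  congr 1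
  ext κ
  constructor
  · rintro ⟨𝒳, hblock, hreap, rfl⟩
    exact IsReapingFamily.exists_isHomWitness_mk_eq ⟨hblock, hreap⟩
  · rintro ⟨𝒳, h𝒳, rfl⟩
    exact ⟨𝒳, h𝒳.1, h𝒳.isReapingFamily.2, rfl⟩
end

section
/- If u is a union ultrafilter on [ω]^{<ω}, then declaring the collection {A ∪ {∅} : A ∈ u} to be a neighbourhood base of the identity element ∅ yields a topology on the Boolean group ([ω]^{<ω} ∪ {∅}, △) (finite subsets of ω under symmetric difference) making it an extremally disconnected topological group; that is, there is a group topology on this group in which the neighbourhood filter of ∅ is generated by {A ∪ {∅} : A ∈ u}, and the resulting topological space is extremally disconnected. -/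
/-!
If `X` is pairwise disjoint, then `FU X ∪ {∅}` is a subgroup: for finite `F, G ⊆ X`, the symmetric
difference of `⋃ F` and `⋃ G` is `⋃ (F ∆ G)`. So the filter `pure ∅ ⊔ u` has a base of subgroups and
is the neighbourhood filter of `∅` in a group topology. In it every `𝓝 x` is `pure x ⊔ v` for some
ultrafilter `v`, the translate of `u`, which forces extremal disconnectedness: if `U` is open and
`x` lies in the closure of `U` but not in `U`, then `v` cannot contain the complement of `U`, hence
contains `U`, and `U ∪ {x}` is a neighbourhood of `x`.
-/

open Filter Topology
open scoped symmDiff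

theorem extremallyDisconnected_of_nhds_le_pure_sup_ultrafilter {X : Type*} [TopologicalSpace X]
    (h : ∀ x : X, ∃ v : Ultrafilter X, 𝓝 x ≤ pure x ⊔ (v : Filter X)) :
    ExtremallyDisconnected X where
  open_closure U hU := by
    refine isOpen_iff_mem_nhds.2 fun x hx => ?_
    by_cases hxU : x ∈ U
    · exact mem_of_superset (hU.mem_nhds hxU) subset_closure
    obtain ⟨v, hv⟩ := h x
    have hUv : U ∈ v := by
      by_contra hUv
      have hUc : Uᶜ ∈ 𝓝 x := hv ⟨hxU, Ultrafilter.compl_mem_iff_notMem.2 hUv⟩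
      exact mem_closure_iff_frequently.1 hx hUc
    exact hv ⟨hx, mem_of_superset hUv subset_closure⟩

theorem extremallyDisconnected_of_nhds_zero_le_pure_sup_ultrafilter {G : Type*} [AddGroup G]
    [TopologicalSpace G] [SeparatelyContinuousAdd G] {u : Ultrafilter G}
    (hu : 𝓝 (0 : G) ≤ pure 0 ⊔ (u : Filter G)) : ExtremallyDisconnected G := by
  refine extremallyDisconnected_of_nhds_le_pure_sup_ultrafilter fun x => ⟨u.map (x + ·), ?_⟩
  calc 𝓝 x = 𝓝 (x + 0) := by rw [add_zero]
    _ = map (x + ·) (𝓝 0) := ((Homeomorph.addLeft x).map_nhds_eq 0).symm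
    _ ≤ map (x + ·) (pure 0 ⊔ (u : Filter G)) := map_mono hu
    _ = pure x ⊔ (u.map (x + ·) : Filter G) := by
      rw [Filter.map_sup, Filter.map_pure, add_zero, Ultrafilter.coe_map]

theorem exists_isTopologicalAddGroup_nhds_zero_eq_of_addSubgroup_basis {G : Type*} [AddGroup G]
    {l : Filter G}
    (hl : ∀ A ∈ l, ∃ H : AddSubgroup G, H.Normal ∧ (H : Set G) ∈ l ∧ (H : Set G) ⊆ A) :
    ∃ _ : TopologicalSpace G, IsTopologicalAddGroup G ∧ 𝓝 (0 : G) = l := by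
  let B : AddGroupFilterBasis G :=
    { sets := {S | ∃ H : AddSubgroup G, H.Normal ∧ (H : Set G) ∈ l ∧ (H : Set G) = S}
      nonempty := ⟨_, ⊤, inferInstance, univ_mem, rfl⟩
      inter_sets := by
        rintro _ _ ⟨H, hH, hHl, rfl⟩ ⟨K, hK, hKl, rfl⟩
        exact ⟨_, ⟨H ⊓ K, inferInstance, inter_mem hHl hKl, rfl⟩, subset_rfl⟩
      zero' := by
        rintro _ ⟨H, -, -, rfl⟩
        exact H.zero_mem
      add' := by
        rintro _ ⟨H, hH, hHl, rfl⟩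
        exact ⟨H, ⟨H, hH, hHl, rfl⟩, Set.add_subset_iff.2 fun _ ha _ hb => H.add_mem ha hb⟩
      neg' := by
        rintro _ ⟨H, hH, hHl, rfl⟩
        exact ⟨H, ⟨H, hH, hHl, rfl⟩, fun _ => H.neg_mem⟩
      conj' := by
        rintro x _ ⟨H, hH, hHl, rfl⟩
        exact ⟨H, ⟨H, hH, hHl, rfl⟩, fun a ha => hH.conj_mem a ha x⟩ }
  refine ⟨B.topology, B.isTopologicalAddGroup, ?_⟩
  ext A
  rw [B.nhds_zero_hasBasis.mem_iff]
  constructor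
  · rintro ⟨_, ⟨H, -, hHl, rfl⟩, hHA⟩
    exact mem_of_superset hHl hHA
  · intro hA
    obtain ⟨H, hH, hHl, hHA⟩ := hl A hA
    exact ⟨H, ⟨H, hH, hHl, rfl⟩, hHA⟩

section SupClosure

variable {β : Type*} [SemilatticeSup β] [OrderBot β] {X : Set β} {a : β}

theorem mem_supClosure_iff_exists_sup :
    a ∈ supClosure X ↔ ∃ F : Finset β, F.Nonempty ∧ ↑F ⊆ X ∧ a = F.sup id := by
  constructor
  · rintro ⟨F, hF, hFX, rfl⟩
    exact ⟨F, hF, hFX, Finset.sup'_eq_sup hF id⟩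
  · rintro ⟨F, hF, hFX, rfl⟩
    exact ⟨F, hF, hFX, Finset.sup'_eq_sup hF id⟩

theorem mem_insert_bot_supClosure_iff_exists_sup :
    a ∈ insert ⊥ (supClosure X) ↔ ∃ F : Finset β, ↑F ⊆ X ∧ a = F.sup id := by
  rw [Set.mem_insert_iff, mem_supClosure_iff_exists_sup]
  constructor
  · rintro (rfl | ⟨F, -, hF⟩)
    · exact ⟨∅, by simp⟩
    · exact ⟨F, hF⟩
  · rintro ⟨F, hFX, rfl⟩
    obtain rfl | hF := F.eq_empty_or_nonempty
    · exact Or.inl Finset.sup_empty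
    · exact Or.inr ⟨F, hF, hFX, rfl⟩

theorem FU_eq_supClosure (X : Set (Finset ℕ)) : FU X = supClosure X :=
  Set.ext fun _ => mem_supClosure_iff_exists_sup.symm

end SupClosure

section BooleanGroup

variable {α : Type*} [GeneralizedBooleanAlgebra α]

theorem sup_sdiff_sup_of_pairwiseDisjoint {ι : Type*} [DecidableEq ι] {f : ι → α} {F G : Finset ι}
    (h : (F ∪ G : Set ι).PairwiseDisjoint f) : F.sup f \ G.sup f = (F \ G).sup f := by
  refine le_antisymm (sdiff_le_iff.2 ?_) (Finset.sup_le fun i hi => ?_)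
  · rw [← Finset.sup_union, Finset.union_sdiff_self_eq_union]
    exact Finset.sup_mono Finset.subset_union_right
  · obtain ⟨hiF, hiG⟩ := Finset.mem_sdiff.1 hi
    refine le_sdiff.2 ⟨Finset.le_sup hiF, Finset.disjoint_sup_right.2 fun j hj => ?_⟩
    exact h (Or.inl hiF) (Or.inr hj) (ne_of_mem_of_not_mem hj hiG).symm

theorem sup_symmDiff_sup_of_pairwiseDisjoint {ι : Type*} [DecidableEq ι] {f : ι → α}
    {F G : Finset ι} (h : (F ∪ G : Set ι).PairwiseDisjoint f) :
    F.sup f ∆ G.sup f = (F ∆ G).sup f := by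
  rw [symmDiff_def, symmDiff_def, sup_sdiff_sup_of_pairwiseDisjoint h,
    sup_sdiff_sup_of_pairwiseDisjoint (Set.union_comm (F : Set ι) G ▸ h)]
  exact Finset.sup_union.symm

/-- The Boolean group of a generalized Boolean algebra: addition is symmetric difference, zero is
`⊥` and negation is the identity. It is a local instance, since `α` may carry another addition. -/
abbrev booleanAddCommGroup (α : Type*) [GeneralizedBooleanAlgebra α] : AddCommGroup α :=
  inferInstanceAs (AddCommGroup (AsBoolRing α))

attribute [local instance] booleanAddCommGroup

/-- The subgroup of the Boolean group consisting of all finite joins, the empty one included, of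
members of a pairwise disjoint family `X`: the paper's `FU(X) ∪ {∅}`. -/
def supClosureSubgroup (X : Set α) (hX : X.PairwiseDisjoint id) : AddSubgroup α where
  carrier := insert ⊥ (supClosure X)
  zero_mem' := Set.mem_insert ⊥ _
  neg_mem' := id
  add_mem' := by
    classical
    simp only [mem_insert_bot_supClosure_iff_exists_sup]
    rintro _ _ ⟨F, hFX, rfl⟩ ⟨G, hGX, rfl⟩
    have hFG : (F ∪ G : Set α) ⊆ X := Set.union_subset hFX hGX
    refine ⟨F ∆ G, ?_, sup_symmDiff_sup_of_pairwiseDisjoint (hX.subset hFG)⟩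
    rw [Finset.coe_symmDiff]
    exact Set.symmDiff_subset_union.trans hFG

theorem union_ultrafilter_gives_extremally_disconnected_group_general (u : Ultrafilter α)
    (hu : ∀ A ∈ u, ∃ X : Set α, X.PairwiseDisjoint id ∧ supClosure X ⊆ A ∧ supClosure X ∈ u) :
    ∃ _ : TopologicalSpace α,
      (∀ B : Set α, B ∈ 𝓝 ⊥ ↔ ∃ A ∈ u, A ∪ {⊥} ⊆ B) ∧
      Continuous (fun p : α × α => p.1 ∆ p.2) ∧
      ∀ U : Set α, IsOpen U → IsOpen (closure U) := by
  have subgroup_base : ∀ A ∈ pure (0 : α) ⊔ (u : Filter α), ∃ H : AddSubgroup α,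
      H.Normal ∧ (H : Set α) ∈ pure (0 : α) ⊔ (u : Filter α) ∧ (H : Set α) ⊆ A := by
    rintro A ⟨h0, hA⟩
    obtain ⟨X, hX, hXA, hXu⟩ := hu A hA
    exact ⟨supClosureSubgroup X hX, inferInstance,
      ⟨AddSubgroup.zero_mem _, mem_of_superset hXu (Set.subset_insert ⊥ _)⟩,
      Set.insert_subset h0 hXA⟩
  obtain ⟨t, _, ht⟩ := exists_isTopologicalAddGroup_nhds_zero_eq_of_addSubgroup_basis subgroup_base
  refine ⟨t, fun B => ?_, continuous_add,
    (extremallyDisconnected_of_nhds_zero_le_pure_sup_ultrafilter ht.le).open_closure⟩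
  rw [show 𝓝 ⊥ = pure ⊥ ⊔ (u : Filter α) from ht]
  constructor
  · rintro ⟨h0, hB⟩
    exact ⟨B, hB, Set.union_subset subset_rfl (Set.singleton_subset_iff.2 h0)⟩
  · rintro ⟨A, hA, hAB⟩
    exact ⟨hAB (Or.inr rfl), mem_of_superset hA (Set.subset_union_left.trans hAB)⟩

end BooleanGroup

/-- If `u` is a union ultrafilter on `[ω]^{<ω}` (here realized as an ultrafilter on
`Finset ℕ` concentrating on nonempty finite sets), then there is a topology on the
Boolean group of finite subsets of ω under symmetric difference which makes it a
topological group (the operation `(x, y) ↦ x △ y` is continuous; since every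
element is its own inverse this is exactly the topological-group condition), in
which the neighbourhood filter of the identity `∅` is generated by the sets
`A ∪ {∅}` for `A ∈ u`, and which is extremally disconnected (the closure of every
open set is open). -/
theorem union_ultrafilter_gives_extremally_disconnected_group
    (u : Ultrafilter (Finset ℕ))
    (hne : {s : Finset ℕ | s.Nonempty} ∈ u)
    (hu : ∀ A ∈ u, ∃ X : Set (Finset ℕ), X.Infinite ∧ (∀ x ∈ X, x.Nonempty) ∧
      X.Pairwise (fun a b => Disjoint a b) ∧ FU X ⊆ A ∧ FU X ∈ u) :
    ∃ t : TopologicalSpace (Finset ℕ),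
      -- the neighbourhood filter of ∅ is generated by {A ∪ {∅} : A ∈ u}
      (∀ B : Set (Finset ℕ),
        B ∈ @nhds (Finset ℕ) t ∅ ↔ ∃ A ∈ u, A ∪ {(∅ : Finset ℕ)} ⊆ B) ∧
      -- group topology: symmetric difference is (jointly) continuous
      (@Continuous (Finset ℕ × Finset ℕ) (Finset ℕ)
        (@instTopologicalSpaceProd _ _ t t) t
        (fun p => symmDiff p.1 p.2)) ∧
      -- extremally disconnected
      (∀ U : Set (Finset ℕ), @IsOpen _ t U → @IsOpen _ t (@closure _ t U)) := by
  simp only [FU_eq_supClosure] at hu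
  exact union_ultrafilter_gives_extremally_disconnected_group_general u fun A hA =>
    let ⟨X, _, _, hX, hXA, hXu⟩ := hu A hA
    ⟨X, hX, hXA, hXu⟩
end
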